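/- (Minimax upper bound.) Fix reals a_ℓ < a_u. There exists a constant C > 0 depending only on a_ℓ and a_u with the following property. Let p ≥ 2, 1 ≤ s ≤ p−1, n ≥ 1 be integers, δ ∈ [0,1), and T > 0. Let D ∈ ℝ^{p×p} be an orthogonal matrix whose first column is d₁ = p^{−1/2}(1,…,1)^⊤, with D̄ denoting D with its first column removed. Let Ã ∈ ℝ^{n×p} have all entries in [a_ℓ/√n, a_u/√n], assume (1−δ)‖u‖₂² ≤ ‖ÃDu‖₂² ≤ (1+δ)‖u‖₂² for every u ∈ ℝ^p with ‖u‖₀ ≤ 2s, and set A = (Ã + ((a_u − 2a_ℓ)/√n)·𝟙_{n×p}) / (2√n(a_u − a_ℓ)). Then the minimax risk satisfies inf_{f̂} sup_{f* ∈ F_{p,s,D}} E‖f̂(y) − f*‖₂² ≤ C · min( s·log₂(p)/((1−δ)T) + s·log₂(T+1)/((1−δ)T), s·max_{j,k} D_{j,k}², 1 ). -/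

import Mathlib

open scoped Classical ENNReal
open MeasureTheory

/-!
The bounds `1` and `s · max D²` are attained by the constant estimator `1 / p`: writing
`f - 1 / p` in the orthonormal columns of `D̄`, it has at most `s` nonzero coefficients, each at
most `max |D| · ‖f‖₁` (`sum_sq_uniform_sub_le`, `sum_sq_uniform_sub_le_one`).

For the statistical rate, `f` is estimated by least squares over a finite net inside the signal
class, built by rounding the at most `s` nonzero coefficients (`exists_net`); the logarithm of its
cardinality is of order `s (log p + log T)`. The rescaling of `Ã` keeps all intensities `(A f)_i`
in `[1 / (2n), 1 / n]` (`intensity_mem_Icc`). So for `k` in the net the excess empirical loss,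
multiplied by `nT / 8`, is `nT / 8 · ‖A f_k - A f‖²` minus a weighted sum of centered Poisson
variables whose weights are at most `1` in absolute value. Its exponential moments are controlled
by `e ^ t - 1 - t ≤ t²`, and a union bound over the net gives `least_squares_oracle`. Differences
of elements of the signal class are `2s`-sparse in the basis `D` and sum to zero, so the RIP
converts the prediction error into the estimation error (`rip_signalClass`). When `T ≤ 1` the
statistical rate is at least `1`, so the constant estimator suffices.
-/

/-! ### Poisson exponential moments and least squares -/

/-- Holds because `log E exp (t (y - r)) = r (exp t - 1 - t)` exactly. -/
lemma lintegral_exp_poisson_le (r : NNReal) (t : ℝ) (ht : |t| ≤ 1) :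
    ∫⁻ y : ℕ, ENNReal.ofReal (Real.exp (t * ((y : ℝ) - r))) ∂(ProbabilityTheory.poissonMeasure r)
      ≤ ENNReal.ofReal (Real.exp (r * t ^ 2)) := by
  have hterm : ∀ y : ℕ, ENNReal.ofReal (Real.exp (t * ((y : ℝ) - r))) *
      ProbabilityTheory.poissonMeasure r {y} =
      ENNReal.ofReal (Real.exp (r * (Real.exp t - 1 - t)) *
        (Real.exp (-((r * (Real.exp t).toNNReal : NNReal) : ℝ)) *
          ((r * (Real.exp t).toNNReal : NNReal) : ℝ) ^ y / (y.factorial : ℝ))) := by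
    intro y
    rw [ProbabilityTheory.poissonMeasure_singleton, ← ENNReal.ofReal_mul (Real.exp_pos _).le]
    congr 1
    have h1 : ((r * (Real.exp t).toNNReal : NNReal) : ℝ) = r * Real.exp t := by
      rw [NNReal.coe_mul, Real.coe_toNNReal _ (Real.exp_pos _).le]
    have h2 : Real.exp (t * ((y : ℝ) - r)) * Real.exp (-r) =
        Real.exp (r * (Real.exp t - 1 - t)) * Real.exp (-(r * Real.exp t)) * Real.exp t ^ y := by
      rw [← Real.exp_nat_mul, ← Real.exp_add, ← Real.exp_add, ← Real.exp_add]
      congr 1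
      ring
    rw [h1, mul_pow]
    calc _ = (Real.exp (t * ((y : ℝ) - r)) * Real.exp (-r)) * (r ^ y / (y.factorial : ℝ)) := by ring
      _ = _ := by rw [h2]; ring
  rw [lintegral_countable']
  simp_rw [hterm]
  have hs := (ProbabilityTheory.hasSum_one_poissonMeasure (r * (Real.exp t).toNNReal)).mul_left
    (Real.exp (r * (Real.exp t - 1 - t)))
  rw [← ENNReal.ofReal_tsum_of_nonneg (fun y => by positivity) hs.summable, hs.tsum_eq, mul_one]
  apply ENNReal.ofReal_le_ofReal
  apply Real.exp_le_exp.mpr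
  exact mul_le_mul_of_nonneg_left ((le_abs_self _).trans (Real.abs_exp_sub_one_sub_id_le ht)) r.2

lemma lintegral_exp_pi_poisson_le {n : ℕ} (r : Fin n → NNReal) (t : Fin n → ℝ)
    (ht : ∀ i, |t i| ≤ 1) :
    ∫⁻ y : Fin n → ℕ, ENNReal.ofReal (Real.exp (∑ i, t i * ((y i : ℝ) - r i)))
        ∂(Measure.pi fun i => ProbabilityTheory.poissonMeasure (r i))
      ≤ ENNReal.ofReal (Real.exp (∑ i, r i * t i ^ 2)) := by
  have hind : ProbabilityTheory.iIndepFun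
      (fun (i : Fin n) (y : Fin n → ℕ) => ENNReal.ofReal (Real.exp (t i * ((y i : ℝ) - r i))))
      (Measure.pi fun i => ProbabilityTheory.poissonMeasure (r i)) :=
    ProbabilityTheory.iIndepFun_pi (X := fun (i : Fin n) (m : ℕ) =>
      ENNReal.ofReal (Real.exp (t i * ((m : ℝ) - r i)))) (fun i => .of_discrete)
  simp_rw [Real.exp_sum, ENNReal.ofReal_prod_of_nonneg (fun i _ => (Real.exp_pos _).le)]
  have h := ProbabilityTheory.lintegral_prod_eq_prod_lintegral_of_indepFun Finset.univ _ hind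
    (fun i => .of_discrete)
  refine h.le.trans (Finset.prod_le_prod' fun i _ => ?_)
  rw [(measurePreserving_eval (fun i => ProbabilityTheory.poissonMeasure (r i)) i).lintegral_comp
    (f := fun m : ℕ => ENNReal.ofReal (Real.exp (t i * ((m : ℝ) - r i)))) .of_discrete]
  exact lintegral_exp_poisson_le _ _ (ht i)

/-- Oracle inequality for least squares over the finite family `G`, with selected index `κ y`: the
prediction error is bounded by the log-cardinality of the family and the error of any fixed
member `k₀`. -/
lemma least_squares_oracle {n : ℕ} {K : Type} [Fintype K] (hn : 1 ≤ n)
    {T : ℝ} (hT : 0 < T) (g : Fin n → ℝ) (G : K → Fin n → ℝ)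
    (hg : ∀ i, g i ∈ Set.Icc (1 / (2 * (n : ℝ))) (1 / n))
    (hG : ∀ k i, G k i ∈ Set.Icc (1 / (2 * (n : ℝ))) (1 / n))
    (κ : (Fin n → ℕ) → K)
    (hκ : ∀ y k, ∑ i, ((y i : ℝ) / T - G (κ y) i) ^ 2 ≤ ∑ i, ((y i : ℝ) / T - G k i) ^ 2)
    (k₀ : K) :
    ∫⁻ y, ENNReal.ofReal (n * T / 16 * ∑ i, (G (κ y) i - g i) ^ 2)
        ∂(Measure.pi fun i => ProbabilityTheory.poissonMeasure (T * g i).toNNReal)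
      ≤ ENNReal.ofReal (Real.log (Fintype.card K) + 2
          + 3 / 16 * (n * T) * ∑ i, (G k₀ i - g i) ^ 2) := by
  have hn0 : (0 : ℝ) < n := by exact_mod_cast hn
  have hgpos : ∀ i, 0 ≤ g i := fun i => le_trans (by positivity) (hg i).1
  set V : K → ℝ := fun k => ∑ i, (G k i - g i) ^ 2 with hV
  have hV0 : ∀ k, 0 ≤ V k := fun k => Finset.sum_nonneg fun i _ => sq_nonneg _
  -- `W k y` is the weighted noise sum, with weights `n / 4 * (G k i - g i)`
  set W : K → (Fin n → ℕ) → ℝ := fun k y =>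
    ∑ i, (n / 4 * (G k i - g i)) * ((y i : ℝ) - ((T * g i).toNNReal : NNReal)) with hW
  have hr : ∀ i, (((T * g i).toNNReal : NNReal) : ℝ) = T * g i := fun i =>
    Real.coe_toNNReal _ (mul_nonneg hT.le (hgpos i))
  have hexc : ∀ k y, (n * T / 8) * (∑ i, ((y i : ℝ) / T - G k i) ^ 2
      - ∑ i, ((y i : ℝ) / T - g i) ^ 2) = n * T / 8 * V k - W k y := by
    intro k y
    simp only [hV, hW, hr]
    rw [← Finset.sum_sub_distrib, Finset.mul_sum, Finset.mul_sum, ← Finset.sum_sub_distrib]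
    refine Finset.sum_congr rfl fun i _ => ?_
    field_simp
    ring
  have ht1 : ∀ k i, |n / 4 * (G k i - g i)| ≤ 1 := by
    intro k i
    have h1 := hg i
    have h2 := hG k i
    have e : 1 / (2 * (n : ℝ)) = 1 / 2 * (1 / n) := by field_simp
    have e2 : (n : ℝ) * (1 / n) = 1 := by field_simp
    rw [e] at h1 h2
    have h3 : |G k i - g i| ≤ 1 / n := by
      rw [abs_le]; constructor <;> linarith [h1.1, h1.2, h2.1, h2.2]
    rw [abs_mul, abs_of_nonneg (by positivity)]
    calc (n : ℝ) / 4 * |G k i - g i| ≤ n / 4 * (1 / n) := by gcongr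
      _ ≤ 1 := by linarith
  have hvar : ∀ k, ∑ i, (((T * g i).toNNReal : NNReal) : ℝ) * (n / 4 * (G k i - g i)) ^ 2
      ≤ n * T / 16 * V k := by
    intro k
    simp only [hV, hr]
    rw [Finset.mul_sum]
    refine Finset.sum_le_sum fun i _ => ?_
    have : T * g i ≤ T * (1 / n) := by gcongr; exact (hg i).2
    calc _ ≤ T * (1 / n) * (n / 4 * (G k i - g i)) ^ 2 := by gcongr
      _ = _ := by field_simp; ring
  set μ := (Measure.pi fun i => ProbabilityTheory.poissonMeasure (T * g i).toNNReal) with hμ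
  have hplus : ∀ k, ∫⁻ y, ENNReal.ofReal (Real.exp (W k y)) ∂μ
      ≤ ENNReal.ofReal (Real.exp (n * T / 16 * V k)) := fun k =>
    (lintegral_exp_pi_poisson_le _ _ (ht1 k)).trans
      (ENNReal.ofReal_le_ofReal (Real.exp_le_exp.mpr (hvar k)))
  have hminus : ∀ k, ∫⁻ y, ENNReal.ofReal (Real.exp (- W k y)) ∂μ
      ≤ ENNReal.ofReal (Real.exp (n * T / 16 * V k)) := by
    intro k
    have h := lintegral_exp_pi_poisson_le (fun i => (T * g i).toNNReal)
      (fun i => -(n / 4 * (G k i - g i))) (fun i => by rw [abs_neg]; exact ht1 k i)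
    simp only [neg_mul, Finset.sum_neg_distrib, neg_sq] at h
    exact h.trans (ENNReal.ofReal_le_ofReal (Real.exp_le_exp.mpr (hvar k)))
  have hcard : (0 : ℝ) < Fintype.card K := by
    exact_mod_cast Fintype.card_pos_iff.mpr ⟨k₀⟩
  have hlog : 0 ≤ Real.log (Fintype.card K) :=
    Real.log_nonneg (by exact_mod_cast Fintype.card_pos_iff.mpr ⟨k₀⟩)
  set c : ℝ := 3 / 16 * (n * T) * V k₀ with hc
  have hc0 : 0 ≤ c := by have := hV0 k₀; positivity
  set a : ℝ := (Fintype.card K : ℝ)⁻¹ with ha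
  -- `x ≤ exp (x - b) + b` plays the role of Jensen's inequality
  have hpt : ∀ y, n * T / 16 * V (κ y) ≤
      (∑ k, a * Real.exp (-(n * T / 16 * V k)) * Real.exp (W k y))
        + Real.exp (n * T / 8 * V k₀ - c) * Real.exp (- W k₀ y)
        + (Real.log (Fintype.card K) + c) := by
    intro y
    have h1 : n * T / 8 * V (κ y) - W (κ y) y ≤ n * T / 8 * V k₀ - W k₀ y := by
      rw [← hexc, ← hexc]
      have := hκ y k₀
      gcongr
    have h2 : W (κ y) y - n * T / 16 * V (κ y) - Real.log (Fintype.card K) ≤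
        a * Real.exp (-(n * T / 16 * V (κ y))) * Real.exp (W (κ y) y) := by
      have e : a * Real.exp (-(n * T / 16 * V (κ y))) * Real.exp (W (κ y) y) =
          Real.exp (W (κ y) y - n * T / 16 * V (κ y) - Real.log (Fintype.card K)) := by
        rw [ha, ← Real.exp_log hcard, ← Real.exp_neg, ← Real.exp_add, ← Real.exp_add,
          Real.exp_log hcard]
        congr 1; ring
      rw [e]
      linarith [Real.add_one_le_exp (W (κ y) y - n * T / 16 * V (κ y)
        - Real.log (Fintype.card K))]
    have h3 : a * Real.exp (-(n * T / 16 * V (κ y))) * Real.exp (W (κ y) y) ≤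
        ∑ k, a * Real.exp (-(n * T / 16 * V k)) * Real.exp (W k y) :=
      Finset.single_le_sum (f := fun k => a * Real.exp (-(n * T / 16 * V k)) * Real.exp (W k y))
        (fun k _ => by positivity) (Finset.mem_univ _)
    have h4 : n * T / 8 * V k₀ - W k₀ y - c ≤
        Real.exp (n * T / 8 * V k₀ - c) * Real.exp (- W k₀ y) := by
      rw [← Real.exp_add]
      have := Real.add_one_le_exp (n * T / 8 * V k₀ - c + - W k₀ y)
      linarith
    linarith
  calc ∫⁻ y, ENNReal.ofReal (n * T / 16 * V (κ y)) ∂μ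
      ≤ ∫⁻ y, ((∑ k, ENNReal.ofReal (a * Real.exp (-(n * T / 16 * V k))) *
            ENNReal.ofReal (Real.exp (W k y)))
          + ENNReal.ofReal (Real.exp (n * T / 8 * V k₀ - c)) * ENNReal.ofReal (Real.exp (- W k₀ y))
          + ENNReal.ofReal (Real.log (Fintype.card K) + c)) ∂μ := by
        refine lintegral_mono fun y => (ENNReal.ofReal_le_ofReal (hpt y)).trans ?_
        refine ENNReal.ofReal_add_le.trans ?_
        gcongr
        refine ENNReal.ofReal_add_le.trans ?_
        rw [ENNReal.ofReal_sum_of_nonneg (fun k _ => by positivity),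
          ENNReal.ofReal_mul (Real.exp_pos _).le]
        gcongr with k
        rw [ENNReal.ofReal_mul (by positivity)]
    _ = (∑ k, ENNReal.ofReal (a * Real.exp (-(n * T / 16 * V k))) *
            ∫⁻ y, ENNReal.ofReal (Real.exp (W k y)) ∂μ)
          + ENNReal.ofReal (Real.exp (n * T / 8 * V k₀ - c)) *
            ∫⁻ y, ENNReal.ofReal (Real.exp (- W k₀ y)) ∂μ
          + ENNReal.ofReal (Real.log (Fintype.card K) + c) := by
        rw [lintegral_add_left .of_discrete, lintegral_add_left .of_discrete,
          lintegral_finsetSum _ (fun k _ => .of_discrete), lintegral_const,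
          lintegral_const_mul _ .of_discrete]
        simp_rw [lintegral_const_mul _ (Measurable.of_discrete)]
        simp [hμ]
    _ ≤ (∑ k : K, ENNReal.ofReal a) + ENNReal.ofReal 1
          + ENNReal.ofReal (Real.log (Fintype.card K) + c) := by
        gcongr with k
        · refine (mul_le_mul_right (hplus k) _).trans ?_
          rw [← ENNReal.ofReal_mul (by positivity), mul_assoc, ← Real.exp_add]
          simp
        · refine (mul_le_mul_right (hminus k₀) _).trans ?_
          rw [← ENNReal.ofReal_mul (by positivity), ← Real.exp_add]
          refine ENNReal.ofReal_le_ofReal (le_of_eq ?_)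
          rw [Real.exp_eq_one_iff, hc]
          ring
    _ = ENNReal.ofReal (Real.log (Fintype.card K) + 2 + c) := by
        rw [← ENNReal.ofReal_sum_of_nonneg (fun k _ => by positivity),
          ← ENNReal.ofReal_add (Finset.sum_nonneg fun k _ => by positivity) zero_le_one,
          ← ENNReal.ofReal_add (by positivity) (by positivity)]
        congr 1
        rw [Finset.sum_const, Finset.card_univ, nsmul_eq_mul, ha, mul_inv_cancel₀ hcard.ne']
        ring

/-! ### The signal class -/

/-- The signal class `F_{p,s,D}` with `p = q + 1`: probability vectors on `Fin (q + 1)` with at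
most `s` nonzero coefficients `D̄ᵀ f`. -/
def signalClass {q : ℕ} (s : ℕ) (Dbar : Matrix (Fin (q + 1)) (Fin q) ℝ) :
    Set (Fin (q + 1) → ℝ) :=
  {f | (∀ i, 0 ≤ f i) ∧ ∑ i, |f i| = 1 ∧
    (Finset.univ.filter fun i => Dbar.transpose.mulVec f i ≠ 0).card ≤ s}

lemma signalClass_sum {q s : ℕ} {Dbar : Matrix (Fin (q + 1)) (Fin q) ℝ} {f : Fin (q + 1) → ℝ}
    (hf : f ∈ signalClass s Dbar) : ∑ i, f i = 1 := by
  rw [← hf.2.1]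
  exact Finset.sum_congr rfl fun i _ => (abs_of_nonneg (hf.1 i)).symm

lemma signalClass_sum_sq_le {q s : ℕ} {Dbar : Matrix (Fin (q + 1)) (Fin q) ℝ}
    {f : Fin (q + 1) → ℝ} (hf : f ∈ signalClass s Dbar) : ∑ i, f i ^ 2 ≤ 1 := by
  rw [← signalClass_sum hf]
  refine Finset.sum_le_sum fun i _ => ?_
  have h1 : f i ≤ 1 := by
    rw [← signalClass_sum hf]
    exact Finset.single_le_sum (fun j _ => hf.1 j) (Finset.mem_univ i)
  nlinarith [hf.1 i]

section Orthogonal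

variable {q : ℕ} {D : Matrix (Fin (q + 1)) (Fin (q + 1)) ℝ}

lemma sum_sq_transpose_mulVec (hD : D.transpose * D = 1) (x : Fin (q + 1) → ℝ) :
    ∑ i, (D.transpose.mulVec x i) ^ 2 = ∑ i, x i ^ 2 := by
  have h : D.transpose.mulVec x ⬝ᵥ D.transpose.mulVec x = x ⬝ᵥ x := by
    rw [Matrix.dotProduct_mulVec, Matrix.vecMul_transpose, Matrix.mulVec_mulVec,
      mul_eq_one_comm.mp hD, Matrix.one_mulVec]
  simpa [dotProduct, sq] using h

lemma transpose_mulVec_zero (hD0 : ∀ j, D j 0 = 1 / Real.sqrt (q + 1)) {x : Fin (q + 1) → ℝ}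
    (hx : ∑ i, x i = 0) : D.transpose.mulVec x 0 = 0 := by
  simp only [Matrix.mulVec, dotProduct, Matrix.transpose_apply, hD0]
  rw [← Finset.mul_sum, hx, mul_zero]

variable {Dbar : Matrix (Fin (q + 1)) (Fin q) ℝ}

lemma transpose_mulVec_succ (hDbar : Dbar = Matrix.of (fun i (j : Fin q) => D i j.succ))
    (x : Fin (q + 1) → ℝ) (j : Fin q) :
    D.transpose.mulVec x j.succ = Dbar.transpose.mulVec x j := by
  subst hDbar; rfl

lemma sum_sq_Dbar (hD : D.transpose * D = 1) (hD0 : ∀ j, D j 0 = 1 / Real.sqrt (q + 1))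
    (hDbar : Dbar = Matrix.of (fun i (j : Fin q) => D i j.succ)) {x : Fin (q + 1) → ℝ}
    (hx : ∑ i, x i = 0) : ∑ i, x i ^ 2 = ∑ j, (Dbar.transpose.mulVec x j) ^ 2 := by
  rw [← sum_sq_transpose_mulVec hD, Fin.sum_univ_succ, transpose_mulVec_zero hD0 hx]
  simp [transpose_mulVec_succ hDbar]

/-- The columns of `D̄` are orthogonal to the constant vectors. -/
lemma Dbar_mulVec_const (hD : D.transpose * D = 1) (hD0 : ∀ j, D j 0 = 1 / Real.sqrt (q + 1))
    (hDbar : Dbar = Matrix.of (fun i (j : Fin q) => D i j.succ)) (c : ℝ) (j : Fin q) :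
    Dbar.transpose.mulVec (fun _ => c) j = 0 := by
  have h := congrFun (congrFun hD j.succ) 0
  rw [Matrix.mul_apply, Matrix.one_apply_ne (Fin.succ_ne_zero j)] at h
  simp only [Matrix.transpose_apply, hD0] at h
  rw [← Finset.sum_mul] at h
  have h2 : ∑ i, D i j.succ = 0 :=
    (mul_eq_zero.mp h).resolve_right (by positivity)
  subst hDbar
  simp only [Matrix.mulVec, dotProduct, Matrix.transpose_apply, Matrix.of_apply]
  rw [← Finset.sum_mul, h2, zero_mul]

lemma uniform_mem_signalClass (hD : D.transpose * D = 1)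
    (hD0 : ∀ j, D j 0 = 1 / Real.sqrt (q + 1))
    (hDbar : Dbar = Matrix.of (fun i (j : Fin q) => D i j.succ)) (s : ℕ) :
    (fun _ => 1 / ((q : ℝ) + 1)) ∈ signalClass s Dbar := by
  refine ⟨fun i => by positivity, ?_, ?_⟩
  · have h : (0 : ℝ) < (q : ℝ) + 1 := by positivity
    simp [abs_of_pos h, h.ne']
  · simp [Dbar_mulVec_const hD hD0 hDbar]

lemma signalClass_coeff_sq_le (hD : D.transpose * D = 1)
    (hDbar : Dbar = Matrix.of (fun i (j : Fin q) => D i j.succ)) {s : ℕ}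
    {f : Fin (q + 1) → ℝ} (hf : f ∈ signalClass s Dbar) (j : Fin q) :
    (Dbar.transpose.mulVec f j) ^ 2 ≤ 1 := by
  rw [← transpose_mulVec_succ hDbar]
  refine le_trans ?_ (signalClass_sum_sq_le hf)
  rw [← sum_sq_transpose_mulVec hD]
  exact Finset.single_le_sum (f := fun i => (D.transpose.mulVec f i) ^ 2)
    (fun i _ => sq_nonneg _) (Finset.mem_univ _)

/-- Quantizing `s` coefficients to precision `1 / m` yields a net inside the signal class itself,
so that differences of a net point and a signal remain `2s`-sparse. -/
lemma exists_net (hq : 1 ≤ q) (hD : D.transpose * D = 1)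
    (hD0 : ∀ j, D j 0 = 1 / Real.sqrt (q + 1))
    (hDbar : Dbar = Matrix.of (fun i (j : Fin q) => D i j.succ)) (s m : ℕ) (hm : 1 ≤ m) :
    ∃ rep : (Fin s → Fin q × Fin (2 * m + 1)) → Fin (q + 1) → ℝ,
      (∀ k, rep k ∈ signalClass s Dbar) ∧
      ∀ f ∈ signalClass s Dbar, ∃ k, ∑ j, (rep k j - f j) ^ 2 ≤ s / (m : ℝ) ^ 2 := by
  have hm0 : (0 : ℝ) < m := by exact_mod_cast hm
  -- `k` encodes `f`: it lists positions covering the support, with the rounded coefficients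
  let Code : (Fin (q + 1) → ℝ) → (Fin s → Fin q × Fin (2 * m + 1)) → Prop := fun f k =>
    (∀ j, Dbar.transpose.mulVec f j ≠ 0 → ∃ i, (k i).1 = j) ∧
      ∀ i, ((k i).2 : ℕ) = ⌊(Dbar.transpose.mulVec f (k i).1 + 1) * m⌋₊
  have hex : ∀ f ∈ signalClass s Dbar, ∃ k, Code f k := by
    intro f hf
    obtain ⟨φ⟩ : Nonempty
        ((Finset.univ.filter fun i => Dbar.transpose.mulVec f i ≠ 0) ↪ Fin s) :=
      Function.Embedding.nonempty_of_card_le (by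
        rw [Fintype.card_coe, Fintype.card_fin]; exact hf.2.2)
    let e : Fin s → Fin q := Function.extend φ Subtype.val (fun _ => ⟨0, hq⟩)
    refine ⟨fun i => (e i, ⟨⌊(Dbar.transpose.mulVec f (e i) + 1) * m⌋₊, ?_⟩), ?_, fun i => rfl⟩
    · have h1 := (abs_le.mp (abs_le_one_iff_mul_self_le_one.mpr
        ((sq _).symm.le.trans (signalClass_coeff_sq_le hD hDbar hf (e i)))))
      have h2 : ⌊(Dbar.transpose.mulVec f (e i) + 1) * m⌋₊ ≤ 2 * m := by
        apply Nat.floor_le_of_le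
        push_cast
        nlinarith [h1.2]
      omega
    · intro j hj
      exact ⟨φ ⟨j, by simpa using hj⟩, by simp [e, φ.injective.extend_apply]⟩
  have hclose : ∀ f ∈ signalClass s Dbar, ∀ f' ∈ signalClass s Dbar, ∀ k, Code f k → Code f' k →
      ∑ j, (f j - f' j) ^ 2 ≤ s / (m : ℝ) ^ 2 := by
    intro f hf f' hf' k hk hk'
    have hsum : ∑ j, (f - f') j = 0 := by
      simp [Finset.sum_sub_distrib, signalClass_sum hf, signalClass_sum hf']
    have h := sum_sq_Dbar hD hD0 hDbar hsum
    simp only [Pi.sub_apply, Matrix.mulVec_sub] at h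
    rw [h]
    set θ := Dbar.transpose.mulVec f
    set θ' := Dbar.transpose.mulVec f'
    have hone : ∀ i, (θ (k i).1 - θ' (k i).1) ^ 2 ≤ 1 / (m : ℝ) ^ 2 := by
      intro i
      have hb : ∀ g ∈ signalClass s Dbar, ∀ j, 0 ≤ (Dbar.transpose.mulVec g j + 1) * m := by
        intro g hg j
        have h1 := (abs_le.mp (abs_le_one_iff_mul_self_le_one.mpr
          ((sq _).symm.le.trans (signalClass_coeff_sq_le hD hDbar hg j))))
        have : 0 ≤ Dbar.transpose.mulVec g j + 1 := by linarith [h1.1]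
        positivity
      have e1 := Nat.floor_le (hb f hf (k i).1)
      have e2 := Nat.lt_floor_add_one ((θ (k i).1 + 1) * m)
      have e3 := Nat.floor_le (hb f' hf' (k i).1)
      have e4 := Nat.lt_floor_add_one ((θ' (k i).1 + 1) * m)
      have hkk : ⌊(θ (k i).1 + 1) * m⌋₊ = ⌊(θ' (k i).1 + 1) * m⌋₊ :=
        (hk.2 i).symm.trans (hk'.2 i)
      change (⌊(θ (k i).1 + 1) * m⌋₊ : ℝ) ≤ (θ (k i).1 + 1) * m at e1
      change (⌊(θ' (k i).1 + 1) * m⌋₊ : ℝ) ≤ (θ' (k i).1 + 1) * m at e3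
      rw [hkk] at e1 e2
      rw [le_div_iff₀ (by positivity), ← mul_pow, sq_le_one_iff_abs_le_one, abs_le]
      constructor <;> nlinarith
    calc ∑ j, (θ j - θ' j) ^ 2
        = ∑ j ∈ Finset.univ.image (fun i => (k i).1), (θ j - θ' j) ^ 2 := by
          symm
          refine Finset.sum_subset (Finset.subset_univ _) fun j _ hj => ?_
          have hj' : ¬ ∃ i, (k i).1 = j := by simpa using hj
          have h1 : θ j = 0 := by_contra fun h => hj' (hk.1 j h)
          have h2 : θ' j = 0 := by_contra fun h => hj' (hk'.1 j h)
          simp [h1, h2]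
      _ ≤ ∑ i, (θ (k i).1 - θ' (k i).1) ^ 2 :=
          Finset.sum_image_le_of_nonneg (fun j _ => sq_nonneg _)
      _ ≤ ∑ _i : Fin s, 1 / (m : ℝ) ^ 2 := Finset.sum_le_sum fun i _ => hone i
      _ = s / (m : ℝ) ^ 2 := by simp [div_eq_mul_inv]
  refine ⟨fun k => if h : ∃ f ∈ signalClass s Dbar, Code f k then h.choose
    else fun _ => 1 / ((q : ℝ) + 1), fun k => ?_, fun f hf => ?_⟩
  · by_cases h : ∃ f ∈ signalClass s Dbar, Code f k
    · simp only [h, dif_pos]; exact h.choose_spec.1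
    · simp only [h, dif_neg, not_false_eq_true]
      exact uniform_mem_signalClass hD hD0 hDbar s
  · obtain ⟨k, hk⟩ := hex f hf
    have h : ∃ f ∈ signalClass s Dbar, Code f k := ⟨f, hf, hk⟩
    refine ⟨k, ?_⟩
    simp only [h, dif_pos]
    exact hclose _ h.choose_spec.1 f hf k h.choose_spec.2 hk

/-- Every signal is within squared distance `s · max D²` of the uniform distribution. -/
lemma sum_sq_uniform_sub_le (hD : D.transpose * D = 1)
    (hD0 : ∀ j, D j 0 = 1 / Real.sqrt (q + 1))
    (hDbar : Dbar = Matrix.of (fun i (j : Fin q) => D i j.succ)) {s : ℕ}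
    {f : Fin (q + 1) → ℝ} (hf : f ∈ signalClass s Dbar) :
    ∑ j, (1 / ((q : ℝ) + 1) - f j) ^ 2 ≤ s * ⨆ j, ⨆ k, (D j k) ^ 2 := by
  set M := ⨆ j, ⨆ k, (D j k) ^ 2 with hM
  have hDM : ∀ j k, (D j k) ^ 2 ≤ M := fun j k =>
    (le_ciSup (f := fun k => (D j k) ^ 2) (Set.finite_range _).bddAbove k).trans
      (le_ciSup (f := fun j => ⨆ k, (D j k) ^ 2) (Set.finite_range _).bddAbove j)
  have hM0 : 0 ≤ M := (sq_nonneg _).trans (hDM 0 0)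
  have hu := uniform_mem_signalClass hD hD0 hDbar s
  have hsum : ∑ j, ((fun _ => 1 / ((q : ℝ) + 1) : Fin (q + 1) → ℝ) - f) j = 0 := by
    have h1 := signalClass_sum hu
    simp only [Pi.sub_apply, Finset.sum_sub_distrib, signalClass_sum hf, h1, sub_self]
  have h := sum_sq_Dbar hD hD0 hDbar hsum
  simp only [Pi.sub_apply, Matrix.mulVec_sub, Dbar_mulVec_const hD hD0 hDbar, zero_sub,
    neg_sq] at h
  rw [h]
  have hone : ∀ j, (Dbar.transpose.mulVec f j) ^ 2 ≤ M := by
    intro j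
    have h1 : |Dbar.transpose.mulVec f j| ≤ Real.sqrt M := by
      subst hDbar
      calc |∑ i, D i j.succ * f i| ≤ ∑ i, |D i j.succ * f i| := Finset.abs_sum_le_sum_abs _ _
        _ ≤ ∑ i, Real.sqrt M * |f i| := by
          refine Finset.sum_le_sum fun i _ => ?_
          rw [abs_mul]
          gcongr
          exact Real.abs_le_sqrt (hDM _ _)
        _ = Real.sqrt M := by rw [← Finset.mul_sum, hf.2.1, mul_one]
    rw [← sq_abs, ← Real.sq_sqrt hM0]
    gcongr
  calc ∑ j, (Dbar.transpose.mulVec f j) ^ 2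
      = ∑ j ∈ Finset.univ.filter (fun i => Dbar.transpose.mulVec f i ≠ 0),
          (Dbar.transpose.mulVec f j) ^ 2 := by
        symm
        refine Finset.sum_subset (Finset.subset_univ _) fun j _ hj => ?_
        have : Dbar.transpose.mulVec f j = 0 := by simpa using hj
        simp [this]
    _ ≤ ((Finset.univ.filter fun i => Dbar.transpose.mulVec f i ≠ 0).card) • M :=
        Finset.sum_le_card_nsmul _ _ _ fun j _ => hone j
    _ ≤ s * M := by
        rw [nsmul_eq_mul]
        gcongr
        exact_mod_cast hf.2.2

lemma sum_sq_uniform_sub_le_one {s : ℕ}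
    {f : Fin (q + 1) → ℝ} (hf : f ∈ signalClass s Dbar) :
    ∑ j, (1 / ((q : ℝ) + 1) - f j) ^ 2 ≤ 1 := by
  have e : ∀ j, (1 / ((q : ℝ) + 1) - f j) ^ 2 =
      f j ^ 2 - 2 / ((q : ℝ) + 1) * f j + (1 / ((q : ℝ) + 1)) ^ 2 := fun j => by ring
  have hq : (0 : ℝ) < (q : ℝ) + 1 := by positivity
  simp_rw [e]
  rw [Finset.sum_add_distrib, Finset.sum_sub_distrib, ← Finset.mul_sum, signalClass_sum hf]
  have h1 := signalClass_sum_sq_le hf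
  have h2 : ∑ _i : Fin (q + 1), (1 / ((q : ℝ) + 1)) ^ 2 = 1 / ((q : ℝ) + 1) := by
    simp only [Finset.sum_const, Finset.card_univ, Fintype.card_fin, nsmul_eq_mul]
    push_cast
    field_simp
  rw [h2]
  have h3 : 0 < 1 / ((q : ℝ) + 1) := by positivity
  have h4 : 2 / ((q : ℝ) + 1) * 1 = 2 * (1 / ((q : ℝ) + 1)) := by ring
  linarith

variable {n s : ℕ} {al au δ : ℝ} {At A : Matrix (Fin n) (Fin (q + 1)) ℝ}

/-- The affine rescaling of `Ã` puts all intensities of signals between `1 / (2n)` and `1 / n`. -/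
lemma intensity_mem_Icc (hau : al < au) (hn : 1 ≤ n)
    (hAt : ∀ i j, At i j ∈ Set.Icc (al / Real.sqrt n) (au / Real.sqrt n))
    (hA : A = Matrix.of (fun i j =>
      (At i j + (au - 2 * al) / Real.sqrt n) / (2 * Real.sqrt n * (au - al))))
    {f : Fin (q + 1) → ℝ} (hf : f ∈ signalClass s Dbar) (i : Fin n) :
    A.mulVec f i ∈ Set.Icc (1 / (2 * (n : ℝ))) (1 / n) := by
  have hn0 : (0 : ℝ) < n := by exact_mod_cast hn
  have hs : 0 < Real.sqrt n := Real.sqrt_pos.mpr hn0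
  have hΔ : 0 < au - al := by linarith
  have hentry : ∀ j, A i j ∈ Set.Icc (1 / (2 * (n : ℝ))) (1 / n) := by
    intro j
    have h := hAt i j
    have e1 : (1 / (2 * (n : ℝ))) =
        (al / Real.sqrt n + (au - 2 * al) / Real.sqrt n) / (2 * Real.sqrt n * (au - al)) := by
      have : (n : ℝ) = Real.sqrt n * Real.sqrt n := (Real.mul_self_sqrt hn0.le).symm
      nth_rw 1 [this]
      field_simp
      ring
    have e2 : (1 / (n : ℝ)) =
        (au / Real.sqrt n + (au - 2 * al) / Real.sqrt n) / (2 * Real.sqrt n * (au - al)) := by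
      have : (n : ℝ) = Real.sqrt n * Real.sqrt n := (Real.mul_self_sqrt hn0.le).symm
      nth_rw 1 [this]
      field_simp
      ring
    rw [e1, e2, hA]
    simp only [Matrix.of_apply]
    constructor
    · gcongr; exact h.1
    · gcongr; exact h.2
  have hsum := signalClass_sum hf
  simp only [Matrix.mulVec, dotProduct]
  constructor
  · calc 1 / (2 * (n : ℝ)) = ∑ j, 1 / (2 * (n : ℝ)) * f j := by
          rw [← Finset.mul_sum, hsum, mul_one]
      _ ≤ _ := Finset.sum_le_sum fun j _ => mul_le_mul_of_nonneg_right (hentry j).1 (hf.1 j)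
  · calc ∑ j, A i j * f j ≤ ∑ j, 1 / (n : ℝ) * f j :=
          Finset.sum_le_sum fun j _ => mul_le_mul_of_nonneg_right (hentry j).2 (hf.1 j)
      _ = 1 / (n : ℝ) := by rw [← Finset.mul_sum, hsum, mul_one]

/-- Differences of signals sum to zero, so the constant shift in `A` cancels, and their
coefficients in the basis `D` are `2s`-sparse, so the RIP of `ÃD` transfers to `A`. -/
lemma rip_signalClass (hau : al < au) (hn : 1 ≤ n) (hD : D.transpose * D = 1)
    (hD0 : ∀ j, D j 0 = 1 / Real.sqrt (q + 1))
    (hDbar : Dbar = Matrix.of (fun i (j : Fin q) => D i j.succ))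
    (hRIP : ∀ u : Fin (q + 1) → ℝ,
          (Finset.univ.filter fun i => u i ≠ 0).card ≤ 2 * s →
          (1 - δ) * ∑ i, (u i) ^ 2 ≤ ∑ i, ((At * D).mulVec u i) ^ 2 ∧
            ∑ i, ((At * D).mulVec u i) ^ 2 ≤ (1 + δ) * ∑ i, (u i) ^ 2)
    (hA : A = Matrix.of (fun i j =>
      (At i j + (au - 2 * al) / Real.sqrt n) / (2 * Real.sqrt n * (au - al))))
    {f f' : Fin (q + 1) → ℝ} (hf : f ∈ signalClass s Dbar) (hf' : f' ∈ signalClass s Dbar) :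
    (1 - δ) * ∑ j, (f j - f' j) ^ 2 ≤
        4 * n * (au - al) ^ 2 * ∑ i, (A.mulVec f i - A.mulVec f' i) ^ 2 ∧
      4 * n * (au - al) ^ 2 * ∑ i, (A.mulVec f i - A.mulVec f' i) ^ 2 ≤
        (1 + δ) * ∑ j, (f j - f' j) ^ 2 := by
  have hn0 : (0 : ℝ) < n := by exact_mod_cast hn
  have hs : 0 < Real.sqrt n := Real.sqrt_pos.mpr hn0
  have hΔ : 0 < au - al := by linarith
  set x := f - f' with hx
  have hsum : ∑ j, x j = 0 := by
    simp [hx, Finset.sum_sub_distrib, signalClass_sum hf, signalClass_sum hf']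
  have hcard : (Finset.univ.filter fun i => D.transpose.mulVec x i ≠ 0).card ≤ 2 * s := by
    have hsub : (Finset.univ.filter fun i => D.transpose.mulVec x i ≠ 0) ⊆
        ((Finset.univ.filter fun i => Dbar.transpose.mulVec f i ≠ 0) ∪
          (Finset.univ.filter fun i => Dbar.transpose.mulVec f' i ≠ 0)).image Fin.succ := by
      intro i hi
      rw [Finset.mem_filter] at hi
      obtain ⟨j, rfl⟩ : ∃ j, Fin.succ j = i :=
        Fin.exists_succ_eq.mpr fun h => hi.2 (h ▸ transpose_mulVec_zero hD0 hsum)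
      have h2 := hi.2
      rw [transpose_mulVec_succ hDbar, hx, Matrix.mulVec_sub, Pi.sub_apply] at h2
      refine Finset.mem_image_of_mem _ ?_
      simp only [Finset.mem_union, Finset.mem_filter, Finset.mem_univ, true_and]
      by_contra! hc
      exact h2 (by rw [hc.1, hc.2, sub_zero])
    calc _ ≤ _ := Finset.card_le_card hsub
      _ ≤ _ := Finset.card_image_le
      _ ≤ _ := Finset.card_union_le _ _
      _ ≤ 2 * s := by have := hf.2.2; have := hf'.2.2; omega
  have h := hRIP _ hcard
  rw [Matrix.mulVec_mulVec, Matrix.mul_assoc, mul_eq_one_comm.mp hD, Matrix.mul_one,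
    sum_sq_transpose_mulVec hD] at h
  have hAx : ∀ i, A.mulVec f i - A.mulVec f' i =
      At.mulVec x i / (2 * Real.sqrt n * (au - al)) := by
    intro i
    rw [← Pi.sub_apply, ← Matrix.mulVec_sub, ← hx, hA]
    simp only [Matrix.mulVec, dotProduct, Matrix.of_apply]
    have : ∀ j, (At i j + (au - 2 * al) / Real.sqrt n) / (2 * Real.sqrt n * (au - al)) * x j =
        At i j * x j / (2 * Real.sqrt n * (au - al)) +
          (au - 2 * al) / Real.sqrt n / (2 * Real.sqrt n * (au - al)) * x j := fun j => by ring
    simp_rw [this]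
    rw [Finset.sum_add_distrib, ← Finset.mul_sum, hsum, mul_zero, add_zero, Finset.sum_div]
  have heq : 4 * n * (au - al) ^ 2 * ∑ i, (A.mulVec f i - A.mulVec f' i) ^ 2 =
      ∑ i, (At.mulVec x i) ^ 2 := by
    rw [Finset.mul_sum]
    refine Finset.sum_congr rfl fun i _ => ?_
    rw [hAx, div_pow, mul_pow, mul_pow, Real.sq_sqrt hn0.le]
    field_simp
    ring
  rw [heq]
  exact h

/-- The estimator is least squares over the net of `exists_net` with `m = ⌈T⌉`. -/
lemma exists_estimator_rate (hau : al < au) (hq : 1 ≤ q) (hs : 1 ≤ s) (hn : 1 ≤ n)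
    (hδ1 : δ < 1) {T : ℝ} (hT : 1 ≤ T) (hD : D.transpose * D = 1)
    (hD0 : ∀ j, D j 0 = 1 / Real.sqrt (q + 1))
    (hDbar : Dbar = Matrix.of (fun i (j : Fin q) => D i j.succ))
    (hAt : ∀ i j, At i j ∈ Set.Icc (al / Real.sqrt n) (au / Real.sqrt n))
    (hRIP : ∀ u : Fin (q + 1) → ℝ,
          (Finset.univ.filter fun i => u i ≠ 0).card ≤ 2 * s →
          (1 - δ) * ∑ i, (u i) ^ 2 ≤ ∑ i, ((At * D).mulVec u i) ^ 2 ∧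
            ∑ i, ((At * D).mulVec u i) ^ 2 ≤ (1 + δ) * ∑ i, (u i) ^ 2)
    (hA : A = Matrix.of (fun i j =>
      (At i j + (au - 2 * al) / Real.sqrt n) / (2 * Real.sqrt n * (au - al)))) :
    ∃ fhat : (Fin n → ℕ) → Fin (q + 1) → ℝ, ∀ f ∈ signalClass s Dbar,
      ∫⁻ y, ENNReal.ofReal (∑ j, (fhat y j - f j) ^ 2)
          ∂(Measure.pi fun i : Fin n =>
            ProbabilityTheory.poissonMeasure (T * A.mulVec f i).toNNReal)
        ≤ ENNReal.ofReal ((320 * (au - al) ^ 2 + 65) *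
            ((s : ℝ) * Real.logb 2 ((q : ℝ) + 1) / ((1 - δ) * T)
              + (s : ℝ) * Real.logb 2 (T + 1) / ((1 - δ) * T))) := by
  have hn0 : (0 : ℝ) < n := by exact_mod_cast hn
  have hs1 : (1 : ℝ) ≤ s := by exact_mod_cast hs
  have hq1 : (1 : ℝ) ≤ q := by exact_mod_cast hq
  have hΔ : 0 < au - al := by linarith
  have hδ' : 0 < 1 - δ := by linarith
  have hT0 : 0 < T := by linarith
  set m := ⌈T⌉₊ with hm
  have hmT : T ≤ m := Nat.le_ceil T
  have hmT' : (m : ℝ) < T + 1 := Nat.ceil_lt_add_one hT0.le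
  have hm0 : (0 : ℝ) < m := by linarith
  obtain ⟨rep, hrep, hnet⟩ := exists_net hq hD hD0 hDbar s m (by exact_mod_cast hm0)
  have : Nonempty (Fin q) := ⟨⟨0, hq⟩⟩
  have hmin : ∀ y : Fin n → ℕ, ∃ k, ∀ k', ∑ i, ((y i : ℝ) / T - A.mulVec (rep k) i) ^ 2 ≤
      ∑ i, ((y i : ℝ) / T - A.mulVec (rep k') i) ^ 2 := fun y => by
    obtain ⟨k, hk⟩ := Finite.exists_min
      (fun k => ∑ i, ((y i : ℝ) / T - A.mulVec (rep k) i) ^ 2)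
    exact ⟨k, hk⟩
  choose κ hκ using hmin
  refine ⟨fun y => rep (κ y), fun f hf => ?_⟩
  obtain ⟨k₀, hk₀⟩ := hnet f hf
  have horacle := least_squares_oracle hn hT0 (A.mulVec f) (fun k => A.mulVec (rep k))
    (intensity_mem_Icc hau hn hAt hA hf) (fun k => intensity_mem_Icc hau hn hAt hA (hrep k))
    κ hκ k₀
  set μ := Measure.pi fun i : Fin n =>
            ProbabilityTheory.poissonMeasure (T * A.mulVec f i).toNNReal
  set lp := Real.logb 2 ((q : ℝ) + 1)
  set lT := Real.logb 2 (T + 1)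
  have hlp : 1 ≤ lp := by
    rw [Real.le_logb_iff_rpow_le one_lt_two (by positivity), Real.rpow_one]
    linarith
  have hlT : 0 ≤ lT := Real.logb_nonneg one_lt_two (by linarith)
  have hlog : ∀ {x : ℝ}, 1 ≤ x → Real.log x ≤ Real.logb 2 x := fun {x} hx => by
    rw [Real.logb, le_div_iff₀ (Real.log_pos one_lt_two)]
    have := Real.log_nonneg hx
    nlinarith [Real.log_two_lt_d9]
  have hlog2 : Real.log 2 ≤ 1 := by linarith [Real.log_two_lt_d9]
  have hcard : Real.log (Fintype.card (Fin s → Fin q × Fin (2 * m + 1))) ≤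
      s * (3 * lp + lT) := by
    simp only [Fintype.card_fun, Fintype.card_prod, Fintype.card_fin]
    push_cast
    rw [Real.log_pow, Real.log_mul (by positivity) (by positivity)]
    have h1 : Real.log q ≤ lp :=
      (Real.log_le_log (by positivity) (by linarith)).trans (hlog (by linarith))
    have h2 : Real.log (2 * m + 1) ≤ 2 * lp + lT := by
      calc Real.log (2 * m + 1) ≤ Real.log (2 * 2 * (T + 1)) :=
            Real.log_le_log (by positivity) (by linarith)
        _ = Real.log 2 + Real.log 2 + Real.log (T + 1) := by
            rw [Real.log_mul (by norm_num) (by positivity), Real.log_mul two_ne_zero two_ne_zero]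
        _ ≤ 2 * lp + lT := by linarith [hlog (x := T + 1) (by linarith)]
    exact mul_le_mul_of_nonneg_left (by linarith) (by positivity)
  -- the squared discretization error is at most `s / m ^ 2 ≤ s / T`
  have happrox : 4 * (au - al) ^ 2 * (3 / 16 * (n * T) *
      ∑ i, (A.mulVec (rep k₀) i - A.mulVec f i) ^ 2) ≤ s := by
    have h1 := (rip_signalClass hau hn hD hD0 hDbar hRIP hA (hrep k₀) hf).2
    have h2 : (1 + δ) * ∑ j, (rep k₀ j - f j) ^ 2 ≤ 2 * (s / T) := by
      have h3 : (s : ℝ) / (m : ℝ) ^ 2 ≤ s / T := by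
        gcongr
        nlinarith
      have h4 := hk₀.trans h3
      have : 0 ≤ ∑ j, (rep k₀ j - f j) ^ 2 := Finset.sum_nonneg fun _ _ => sq_nonneg _
      nlinarith
    have h5 := mul_le_mul_of_nonneg_left (h1.trans h2) (by positivity : 0 ≤ 3 / 16 * T)
    have h6 : 3 / 16 * T * (2 * (s / T)) = 3 / 8 * s := by field_simp; norm_num
    rw [h6] at h5
    linarith
  set E := Real.log (Fintype.card (Fin s → Fin q × Fin (2 * m + 1))) + 2 +
    3 / 16 * (n * T) * ∑ i, (A.mulVec (rep k₀) i - A.mulVec f i) ^ 2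
  have hE : 64 * (au - al) ^ 2 * E ≤ (320 * (au - al) ^ 2 + 65) * (s * lp + s * lT) := by
    have hslp : (s : ℝ) ≤ s * lp := by nlinarith
    have hslT : 0 ≤ s * lT := by positivity
    have h1 : 64 * (au - al) ^ 2 *
        (Real.log (Fintype.card (Fin s → Fin q × Fin (2 * m + 1))) + 2) ≤
        64 * (au - al) ^ 2 * (5 * (s * lp + s * lT)) := by
      gcongr
      linarith
    simp only [E]
    linarith
  have hpt : ∀ y, ∑ j, (rep (κ y) j - f j) ^ 2 ≤ 64 * (au - al) ^ 2 / ((1 - δ) * T) *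
      (n * T / 16 * ∑ i, (A.mulVec (rep (κ y)) i - A.mulVec f i) ^ 2) := by
    intro y
    have h1 := (rip_signalClass hau hn hD hD0 hDbar hRIP hA (hrep (κ y)) hf).1
    rw [mul_comm, ← le_div_iff₀ hδ'] at h1
    refine h1.trans (le_of_eq ?_)
    field_simp
    ring
  have hcoef : 0 ≤ 64 * (au - al) ^ 2 / ((1 - δ) * T) := by positivity
  calc ∫⁻ y, ENNReal.ofReal (∑ j, (rep (κ y) j - f j) ^ 2) ∂μ
      ≤ ∫⁻ y, ENNReal.ofReal (64 * (au - al) ^ 2 / ((1 - δ) * T)) * ENNReal.ofReal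
        (n * T / 16 * ∑ i, (A.mulVec (rep (κ y)) i - A.mulVec f i) ^ 2) ∂μ := by
        refine lintegral_mono fun y => ?_
        rw [← ENNReal.ofReal_mul hcoef]
        exact ENNReal.ofReal_le_ofReal (hpt y)
    _ ≤ ENNReal.ofReal (64 * (au - al) ^ 2 / ((1 - δ) * T)) * ENNReal.ofReal E := by
        rw [lintegral_const_mul _ .of_discrete]
        gcongr
    _ ≤ _ := by
        rw [← ENNReal.ofReal_mul hcoef]
        apply ENNReal.ofReal_le_ofReal
        rw [← add_div, div_mul_eq_mul_div, ← mul_div_assoc]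
        gcongr

end Orthogonal


/-! ### Assembly of the three regimes -/

/-- **Statement 15 (minimax upper bound, Theorem 2).**  Write `p = q + 1`.  There is a
constant `C > 0` depending only on `aℓ < au` such that, under the physical constraints and
the two-sided RIP condition on `ÃD`, the minimax risk over
`F_{p,s,D} = {f ⪰ 0 : ‖f‖₁ = 1, ‖D̄ᵀf‖₀ ≤ s}`, with observations
`y ~ Poisson(T·Af*)` (a product of Poisson measures on `ℕⁿ`), is at most
`C·min( s·log₂(p)/((1−δ)T) + s·log₂(T+1)/((1−δ)T), s·max_{j,k} D_{j,k}², 1 )`. -/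
theorem minimax_upper_bound
    (al au : ℝ) (hau : al < au) :
    ∃ C : ℝ, 0 < C ∧
      ∀ (q s n : ℕ), 1 ≤ q → 1 ≤ s → s ≤ q → 1 ≤ n →
      ∀ (δ : ℝ), 0 ≤ δ → δ < 1 →
      ∀ (T : ℝ), 0 < T →
      ∀ (D : Matrix (Fin (q + 1)) (Fin (q + 1)) ℝ), D.transpose * D = 1 →
        (∀ j, D j 0 = 1 / Real.sqrt (q + 1)) →
      ∀ (Dbar : Matrix (Fin (q + 1)) (Fin q) ℝ),
        Dbar = Matrix.of (fun i (j : Fin q) => D i j.succ) →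
      ∀ (At : Matrix (Fin n) (Fin (q + 1)) ℝ),
        (∀ i j, At i j ∈ Set.Icc (al / Real.sqrt n) (au / Real.sqrt n)) →
        (∀ u : Fin (q + 1) → ℝ,
          (Finset.univ.filter fun i => u i ≠ 0).card ≤ 2 * s →
          (1 - δ) * ∑ i, (u i) ^ 2 ≤ ∑ i, ((At * D).mulVec u i) ^ 2 ∧
            ∑ i, ((At * D).mulVec u i) ^ 2 ≤ (1 + δ) * ∑ i, (u i) ^ 2) →
      ∀ (A : Matrix (Fin n) (Fin (q + 1)) ℝ),
        A = Matrix.of (fun i j =>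
          (At i j + (au - 2 * al) / Real.sqrt n) / (2 * Real.sqrt n * (au - al))) →
      (⨅ fhat : (Fin n → ℕ) → Fin (q + 1) → ℝ,
          ⨆ fstar ∈ {f : Fin (q + 1) → ℝ | (∀ i, 0 ≤ f i) ∧ ∑ i, |f i| = 1 ∧
              (Finset.univ.filter fun i => Dbar.transpose.mulVec f i ≠ 0).card ≤ s},
            ∫⁻ y, ENNReal.ofReal (∑ j, (fhat y j - fstar j) ^ 2)
              ∂(Measure.pi fun i : Fin n =>
                  ProbabilityTheory.poissonMeasure (T * A.mulVec fstar i).toNNReal))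
        ≤ ENNReal.ofReal (C * min
            ((s : ℝ) * Real.logb 2 ((q : ℝ) + 1) / ((1 - δ) * T)
              + (s : ℝ) * Real.logb 2 (T + 1) / ((1 - δ) * T))
            (min ((s : ℝ) * ⨆ j, ⨆ k, (D j k) ^ 2) 1)) := by
  refine ⟨320 * (au - al) ^ 2 + 65, by positivity, ?_⟩
  intro q s n hq hs _ hn δ hδ hδ1 T hT D hD hD0 Dbar hDbar At hAt hRIP A hA
  set C : ℝ := 320 * (au - al) ^ 2 + 65 with hC
  have hC1 : 1 ≤ C := by nlinarith [sq_nonneg (au - al)]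
  have hmain : ∀ b : ℝ, (∃ fhat : (Fin n → ℕ) → Fin (q + 1) → ℝ, ∀ f ∈ signalClass s Dbar,
      ∫⁻ y, ENNReal.ofReal (∑ j, (fhat y j - f j) ^ 2)
          ∂(Measure.pi fun i : Fin n =>
            ProbabilityTheory.poissonMeasure (T * A.mulVec f i).toNNReal) ≤ ENNReal.ofReal b) →
      (⨅ fhat : (Fin n → ℕ) → Fin (q + 1) → ℝ, ⨆ f ∈ signalClass s Dbar,
        ∫⁻ y, ENNReal.ofReal (∑ j, (fhat y j - f j) ^ 2)
          ∂(Measure.pi fun i : Fin n =>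
            ProbabilityTheory.poissonMeasure (T * A.mulVec f i).toNNReal)) ≤ ENNReal.ofReal b := by
    rintro b ⟨fhat, h⟩
    exact iInf_le_of_le fhat (iSup₂_le h)
  have hconst : ∀ b : ℝ, (∀ f ∈ signalClass s Dbar, ∑ j, (1 / ((q : ℝ) + 1) - f j) ^ 2 ≤ b) →
      ∃ fhat : (Fin n → ℕ) → Fin (q + 1) → ℝ, ∀ f ∈ signalClass s Dbar,
      ∫⁻ y, ENNReal.ofReal (∑ j, (fhat y j - f j) ^ 2)
          ∂(Measure.pi fun i : Fin n =>
            ProbabilityTheory.poissonMeasure (T * A.mulVec f i).toNNReal) ≤ ENNReal.ofReal b := by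
    intro b hb
    refine ⟨fun _ _ => 1 / ((q : ℝ) + 1), fun f hf => ?_⟩
    rw [lintegral_const, measure_univ, mul_one]
    exact ENNReal.ofReal_le_ofReal (hb f hf)
  refine hmain _ ?_
  set a := (s : ℝ) * Real.logb 2 ((q : ℝ) + 1) / ((1 - δ) * T)
              + (s : ℝ) * Real.logb 2 (T + 1) / ((1 - δ) * T) with ha
  rcases min_choice a (min ((s : ℝ) * ⨆ j, ⨆ k, (D j k) ^ 2) 1) with h | h
  · rw [h]
    rcases le_total 1 T with hT1 | hT1
    · exact exists_estimator_rate hau hq hs hn hδ1 hT1 hD hD0 hDbar hAt hRIP hA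
    · refine hconst _ fun f hf => (sum_sq_uniform_sub_le_one hf).trans ?_
      have hq1 : (1 : ℝ) ≤ q := by exact_mod_cast hq
      have hs1 : (1 : ℝ) ≤ s := by exact_mod_cast hs
      have hδ' : 0 < 1 - δ := by linarith
      have hlp : 1 ≤ Real.logb 2 ((q : ℝ) + 1) := by
        rw [Real.le_logb_iff_rpow_le one_lt_two (by positivity), Real.rpow_one]
        linarith
      have hlT : 0 ≤ Real.logb 2 (T + 1) := Real.logb_nonneg one_lt_two (by linarith)
      have h1 : 1 ≤ (s : ℝ) * Real.logb 2 ((q : ℝ) + 1) / ((1 - δ) * T) := by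
        rw [le_div_iff₀ (by positivity)]
        nlinarith
      have h2 : 0 ≤ (s : ℝ) * Real.logb 2 (T + 1) / ((1 - δ) * T) := by positivity
      have ha1 : 1 ≤ a := by linarith
      nlinarith
  · rw [h]
    refine hconst _ fun f hf => ?_
    have h1 : ∑ j, (1 / ((q : ℝ) + 1) - f j) ^ 2 ≤
        min ((s : ℝ) * ⨆ j, ⨆ k, (D j k) ^ 2) 1 :=
      le_min (sum_sq_uniform_sub_le hD hD0 hDbar hf) (sum_sq_uniform_sub_le_one hf)
    have h0 : 0 ≤ ∑ j, (1 / ((q : ℝ) + 1) - f j) ^ 2 := Finset.sum_nonneg fun _ _ => sq_nonneg _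
    nlinarith
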